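/- arXiv:1401.6039 — 2 statements merged into one kernel-verified Lean document; each statement's English description precedes it below -/
import Mathlib

section
/- Convexity in the auxiliary state: for every fixed positive semidefinite complex d×d matrix A and every fixed t ∈ [0,1], the function F ↦ −log Tr(A F^t), defined on the convex set of d×d density operators and taking values in (−∞,∞] with the convention −log 0 = +∞, is convex; equivalently, F ↦ Tr(A F^t) is concave on density operators. -/
open scoped BigOperators ComplexOrder
noncomputable section

namespace SPB

/-- `-log t` with the convention that it is `+∞` for `t ≤ 0`. -/
def negLog (t : ℝ) : EReal := if t ≤ 0 then (⊤ : EReal) else ((-Real.log t : ℝ) : EReal)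

/-- Power of a positive semidefinite (more generally Hermitian) matrix by functional calculus
on the eigenvalues, with the convention `0 ^ r = 0` (so `A ^ 0` is the projection onto the
range of `A`). -/
def mpow {ι : Type*} [Fintype ι] [DecidableEq ι] (A : Matrix ι ι ℂ) (r : ℝ) :
    Matrix ι ι ℂ :=
  if hA : A.IsHermitian then
    (hA.eigenvectorUnitary : Matrix ι ι ℂ) *
      Matrix.diagonal (fun i => ((if hA.eigenvalues i = 0 then (0 : ℝ)
        else hA.eigenvalues i ^ r : ℝ) : ℂ)) *
      (star (hA.eigenvectorUnitary : Matrix ι ι ℂ))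
  else 0

/-- A density operator: positive semidefinite with trace one. -/
def IsDensity {ι : Type*} [Fintype ι] [DecidableEq ι] (A : Matrix ι ι ℂ) : Prop :=
  A.PosSemidef ∧ A.trace = 1

section helpers

open scoped MatrixOrder Matrix.Norms.L2Operator

lemma mpow_eq_rpow {d : ℕ} (F : Matrix (Fin d) (Fin d) ℂ) (hF : F.PosSemidef) (t : ℝ)
    (ht : 0 < t) : mpow F t = F ^ t := by
  rw [CFC.rpow_eq_cfc_real (Matrix.nonneg_iff_posSemidef.mpr hF), hF.1.cfc_eq]
  rw [Matrix.IsHermitian.cfc, Unitary.conjStarAlgAut_apply, mpow, dif_pos hF.1]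
  congr 3
  funext i
  simp only [Function.comp]
  split_ifs with h
  · rw [h, Real.zero_rpow ht.ne']
    rfl
  · rfl

lemma trace_mul_re_nonneg {d : ℕ} (A B : Matrix (Fin d) (Fin d) ℂ) (hA : A.PosSemidef)
    (hB : B.PosSemidef) : 0 ≤ (Matrix.trace (A * B)).re := by
  obtain ⟨C, rfl⟩ := CStarAlgebra.nonneg_iff_eq_star_mul_self.mp
    (Matrix.nonneg_iff_posSemidef.mpr hA)
  have h := (hB.mul_mul_conjTranspose_same C).trace_nonneg
  rw [Matrix.trace_mul_comm, ← mul_assoc] at h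
  exact (Complex.le_def.mp h).1

lemma conc_pos {d : ℕ} (A : Matrix (Fin d) (Fin d) ℂ) (hA : A.PosSemidef)
    (t : ℝ) (ht0 : 0 < t) (ht1 : t ≤ 1) (F₁ F₂ : Matrix (Fin d) (Fin d) ℂ)
    (h₁ : F₁.PosSemidef) (h₂ : F₂.PosSemidef) (p : ℝ) (hp0 : 0 ≤ p) (hp1 : p ≤ 1)
    (h₃ : (((p : ℝ) : ℂ) • F₁ + (((1 - p : ℝ)) : ℂ) • F₂).PosSemidef) :
    p * (Matrix.trace (A * mpow F₁ t)).re + (1 - p) * (Matrix.trace (A * mpow F₂ t)).re ≤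
      (Matrix.trace (A * mpow (((p : ℝ) : ℂ) • F₁ + (((1 - p : ℝ)) : ℂ) • F₂) t)).re := by
  have key := (CFC.concaveOn_rpow (A := Matrix (Fin d) (Fin d) ℂ) (p := t) ⟨ht0.le, ht1⟩).2
    (Matrix.nonneg_iff_posSemidef.mpr h₁) (Matrix.nonneg_iff_posSemidef.mpr h₂)
    hp0 (sub_nonneg.mpr hp1) (by ring)
  rw [mpow_eq_rpow _ h₁ t ht0, mpow_eq_rpow _ h₂ t ht0, mpow_eq_rpow _ h₃ t ht0]
  have e : ∀ (r : ℝ) (M : Matrix (Fin d) (Fin d) ℂ), r • M = (r : ℂ) • M := by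
    intro r M
    ext i j
    simp
  simp only [e] at key
  have h := trace_mul_re_nonneg A _ hA (Matrix.le_iff.mp key)
  simp only [mul_sub, mul_add, Matrix.mul_smul, Matrix.trace_sub, Matrix.trace_add,
    Matrix.trace_smul, Complex.sub_re, Complex.add_re, smul_eq_mul, Complex.re_ofReal_mul] at h
  linarith

end helpers

lemma cont_mpow {d : ℕ} (A F : Matrix (Fin d) (Fin d) ℂ) :
    Continuous (fun t : ℝ => (Matrix.trace (A * mpow F t)).re) := by
  have : Continuous (fun t : ℝ => mpow F t) := by
    unfold mpow
    split_ifs with hF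
    · refine (continuous_const.matrix_mul (Continuous.matrix_diagonal ?_)).matrix_mul
        continuous_const
      refine continuous_pi fun i => Complex.continuous_ofReal.comp ?_
      split_ifs with h
      · exact continuous_const
      · exact Real.continuous_const_rpow h
    · exact continuous_const
  exact Complex.continuous_re.comp (continuous_const.matrix_mul this).matrix_trace

lemma conc_all {d : ℕ} (A : Matrix (Fin d) (Fin d) ℂ) (hA : A.PosSemidef)
    (t : ℝ) (ht0 : 0 ≤ t) (ht1 : t ≤ 1) (F₁ F₂ : Matrix (Fin d) (Fin d) ℂ)
    (h₁ : F₁.PosSemidef) (h₂ : F₂.PosSemidef) (p : ℝ) (hp0 : 0 ≤ p) (hp1 : p ≤ 1) :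
    p * (Matrix.trace (A * mpow F₁ t)).re + (1 - p) * (Matrix.trace (A * mpow F₂ t)).re ≤
      (Matrix.trace (A * mpow (((p : ℝ) : ℂ) • F₁ + (((1 - p : ℝ)) : ℂ) • F₂) t)).re := by
  have h₃ : (((p : ℝ) : ℂ) • F₁ + (((1 - p : ℝ)) : ℂ) • F₂).PosSemidef :=
    (h₁.smul (Complex.zero_le_real.mpr hp0)).add
      (h₂.smul (Complex.zero_le_real.mpr (sub_nonneg.mpr hp1)))
  have hcl : IsClosed {s : ℝ | p * (Matrix.trace (A * mpow F₁ s)).re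
      + (1 - p) * (Matrix.trace (A * mpow F₂ s)).re ≤
      (Matrix.trace (A * mpow (((p : ℝ) : ℂ) • F₁ + (((1 - p : ℝ)) : ℂ) • F₂) s)).re} :=
    isClosed_le (((cont_mpow A F₁).const_mul p).add ((cont_mpow A F₂).const_mul (1 - p)))
      (cont_mpow A _)
  have hsub := closure_minimal (s := Set.Ioc (0 : ℝ) 1)
    (fun s hs => conc_pos A hA s hs.1 hs.2 F₁ F₂ h₁ h₂ p hp0 hp1 h₃) hcl
  rw [closure_Ioc (by norm_num)] at hsub
  exact hsub ⟨ht0, ht1⟩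

lemma negLog_ne_bot (a : ℝ) : negLog a ≠ ⊥ := by
  unfold negLog
  split_ifs
  · simp
  · exact EReal.coe_ne_bot _

lemma mul_negLog_ne_bot (q a : ℝ) (hq : 0 ≤ q) : (q : EReal) * negLog a ≠ ⊥ := by
  rcases hq.eq_or_lt with rfl | hq
  · simp
  unfold negLog
  split_ifs
  · rw [EReal.coe_mul_top_of_pos hq]
    simp
  · rw [← EReal.coe_mul]
    exact EReal.coe_ne_bot _

lemma negLog_anti {a b : ℝ} (h : a ≤ b) : negLog b ≤ negLog a := by
  unfold negLog
  split_ifs with h1 h2 h2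
  · exact le_rfl
  · exact absurd (h.trans h1) h2
  · exact le_top
  · exact EReal.coe_le_coe_iff.mpr (neg_le_neg (Real.log_le_log (not_le.mp h2) h))

lemma negLog_conv (a b c p : ℝ) (hp0 : 0 ≤ p) (hp1 : p ≤ 1) (h : p * a + (1 - p) * b ≤ c) :
    negLog c ≤ (p : EReal) * negLog a + ((1 - p : ℝ) : EReal) * negLog b := by
  refine (negLog_anti h).trans ?_
  rcases hp0.eq_or_lt with rfl | hp0'
  · simp
  rcases hp1.eq_or_lt with rfl | hp1'
  · simp
  have hq : 0 < 1 - p := sub_pos.mpr hp1'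
  by_cases ha : a ≤ 0
  · have : negLog a = ⊤ := if_pos ha
    rw [this, EReal.coe_mul_top_of_pos hp0',
      EReal.top_add_of_ne_bot (mul_negLog_ne_bot _ _ hq.le)]
    exact le_top
  by_cases hb : b ≤ 0
  · have : negLog b = ⊤ := if_pos hb
    rw [this, EReal.coe_mul_top_of_pos hq,
      EReal.add_top_of_ne_bot (mul_negLog_ne_bot _ _ hp0)]
    exact le_top
  push Not at ha hb
  have hc : 0 < p * a + (1 - p) * b := by positivity
  have hl := strictConcaveOn_log_Ioi.concaveOn.2 (Set.mem_Ioi.mpr ha) (Set.mem_Ioi.mpr hb)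
    hp0 hq.le (by ring)
  simp only [smul_eq_mul] at hl
  unfold negLog
  rw [if_neg hc.not_ge, if_neg ha.not_ge, if_neg hb.not_ge, ← EReal.coe_mul, ← EReal.coe_mul,
    ← EReal.coe_add, EReal.coe_le_coe_iff]
  linarith

/-- **Convexity in the auxiliary state**: for `A` positive semidefinite and `t ∈ [0,1]`,
`F ↦ -log Tr(A Fᵗ)` is convex on the density operators (with values in `(-∞,∞]` and the
convention `-log 0 = +∞`); equivalently, `F ↦ Tr(A Fᵗ)` is concave on density operators. -/
theorem negLog_trace_rpow_convex {d : ℕ}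
    (A : Matrix (Fin d) (Fin d) ℂ) (hA : A.PosSemidef)
    (t : ℝ) (ht0 : 0 ≤ t) (ht1 : t ≤ 1) :
    (∀ F₁ F₂ : Matrix (Fin d) (Fin d) ℂ, IsDensity F₁ → IsDensity F₂ →
      ∀ p : ℝ, 0 ≤ p → p ≤ 1 →
        negLog ((Matrix.trace (A * mpow (((p : ℝ) : ℂ) • F₁ + (((1 - p : ℝ)) : ℂ) • F₂) t)).re) ≤
          ((p : ℝ) : EReal) * negLog ((Matrix.trace (A * mpow F₁ t)).re) +
            (((1 - p : ℝ)) : EReal) * negLog ((Matrix.trace (A * mpow F₂ t)).re)) ∧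
    (∀ F₁ F₂ : Matrix (Fin d) (Fin d) ℂ, IsDensity F₁ → IsDensity F₂ →
      ∀ p : ℝ, 0 ≤ p → p ≤ 1 →
        p * (Matrix.trace (A * mpow F₁ t)).re + (1 - p) * (Matrix.trace (A * mpow F₂ t)).re ≤
          (Matrix.trace (A * mpow (((p : ℝ) : ℂ) • F₁ + (((1 - p : ℝ)) : ℂ) • F₂) t)).re) := by
  exact ⟨fun F₁ F₂ h₁ h₂ p hp0 hp1 => negLog_conv _ _ _ p hp0 hp1
      (conc_all A hA t ht0 ht1 F₁ F₂ h₁.1 h₂.1 p hp0 hp1),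
    fun F₁ F₂ h₁ h₂ p hp0 hp1 => conc_all A hA t ht0 ht1 F₁ F₂ h₁.1 h₂.1 p hp0 hp1⟩

end SPB
end
end

section
/- The smallest rate at which the constant-composition sphere packing exponent is finite: for every classical-quantum channel x ↦ S_x with finite input alphabet X and every probability distribution P on X, the limit as ρ → ∞ of E_0^cc(ρ,P)/ρ exists and equals R_∞(P) := min over density operators F on H of −Σ_{x∈X} P(x) log Tr(S_x^0 F), where S_x^0 denotes the orthogonal projection onto the range of S_x. -/
open scoped BigOperators ComplexOrder
noncomputable section

namespace SPB

/-- A probability distribution on a finite alphabet. -/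
def IsProbDist {X : Type*} [Fintype X] (P : X → ℝ) : Prop :=
  (∀ x, 0 ≤ P x) ∧ ∑ x, P x = 1

/-- The constant–composition sphere packing coefficient
`E₀^cc(ρ,P) = min_F -(1+ρ) ∑ₓ P(x) log Tr(Sₓ^{1/(1+ρ)} F^{ρ/(1+ρ)})`. -/
def E0cc {X : Type*} [Fintype X] {d : ℕ} (S : X → Matrix (Fin d) (Fin d) ℂ)
    (ρ : ℝ) (P : X → ℝ) : EReal :=
  ⨅ F : {F : Matrix (Fin d) (Fin d) ℂ // IsDensity F},
    ((1 + ρ : ℝ) : EReal) *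
      ∑ x, ((P x : ℝ) : EReal) *
        negLog ((Matrix.trace (mpow (S x) (1 / (1 + ρ)) * mpow F.1 (ρ / (1 + ρ)))).re)
/-- The cutoff rate `R_∞(P) = min_F -∑ₓ P(x) log Tr(Sₓ⁰ F)`, where `Sₓ⁰` is the orthogonal
projection onto the range of `Sₓ`. -/
def Rinf {X : Type*} [Fintype X] {d : ℕ} (S : X → Matrix (Fin d) (Fin d) ℂ)
    (P : X → ℝ) : EReal :=
  ⨅ F : {F : Matrix (Fin d) (Fin d) ℂ // IsDensity F},
    ∑ x, ((P x : ℝ) : EReal) * negLog ((Matrix.trace (mpow (S x) 0 * F.1)).re)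

def pw (r : ℝ) (l : ℝ) : ℝ := if l = 0 then 0 else l ^ r

lemma pw_nonneg {r l : ℝ} (h : 0 ≤ l) : 0 ≤ pw r l := by
  unfold pw; split_ifs
  · exact le_rfl
  · exact Real.rpow_nonneg h r

lemma mpow_eq {ι : Type*} [Fintype ι] [DecidableEq ι] {A : Matrix ι ι ℂ} (hA : A.IsHermitian)
    (r : ℝ) : mpow A r = (hA.eigenvectorUnitary : Matrix ι ι ℂ) *
      Matrix.diagonal (fun i => ((pw r (hA.eigenvalues i) : ℝ) : ℂ)) *
      (star (hA.eigenvectorUnitary : Matrix ι ι ℂ)) := by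
  rw [mpow, dif_pos hA]; rfl

lemma mpow_one {ι : Type*} [Fintype ι] [DecidableEq ι] {A : Matrix ι ι ℂ} (hA : A.IsHermitian) :
    mpow A 1 = A := by
  rw [mpow_eq hA]
  conv_rhs => rw [hA.spectral_theorem, Unitary.conjStarAlgAut_apply]
  congr 3
  funext i
  simp only [pw, Function.comp, Real.rpow_one]
  split_ifs with h <;> simp [h]

lemma mpow_psd {ι : Type*} [Fintype ι] [DecidableEq ι] {A : Matrix ι ι ℂ} (hA : A.PosSemidef)
    (r : ℝ) : (mpow A r).PosSemidef := by
  rw [mpow_eq hA.1]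
  refine Matrix.PosSemidef.mul_mul_conjTranspose_same ?_ _
  refine Matrix.PosSemidef.diagonal ?_
  intro i
  have := pw_nonneg (r := r) (hA.eigenvalues_nonneg i)
  simpa using this

/-- weights -/
lemma exists_weights {ι : Type*} [Fintype ι] [DecidableEq ι] {A B : Matrix ι ι ℂ}
    (hA : A.IsHermitian) (hB : B.PosSemidef) :
    ∃ w : ι → ℝ, (∀ i, 0 ≤ w i) ∧ ∑ i, w i = B.trace.re ∧
      ∀ r, ((mpow A r * B).trace).re = ∑ i, pw r (hA.eigenvalues i) * w i := by
  set U : Matrix ι ι ℂ := (hA.eigenvectorUnitary : Matrix ι ι ℂ) with hU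
  have hC : (star U * B * U).PosSemidef := hB.conjTranspose_mul_mul_same U
  refine ⟨fun i => ((star U * B * U) i i).re, fun i => ?_, ?_, fun r => ?_⟩
  · exact (Complex.le_def.1 (hC.diag_nonneg (i := i))).1
  · have : (star U * B * U).trace = B.trace := by
      rw [Matrix.trace_mul_cycle, hU, Unitary.mul_star_self_of_mem hA.eigenvectorUnitary.2, one_mul]
    rw [← this, Matrix.trace, Complex.re_sum]; rfl
  · rw [mpow_eq hA, ← hU, mul_assoc, mul_assoc, Matrix.trace_mul_comm, mul_assoc, Matrix.trace,
      Complex.re_sum]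
    refine Finset.sum_congr rfl fun i _ => ?_
    simp [Matrix.diag, Matrix.diagonal_mul]

lemma sum_eig {ι : Type*} [Fintype ι] [DecidableEq ι] {A : Matrix ι ι ℂ} (hA : IsDensity A) :
    ∑ i, hA.1.1.eigenvalues i = 1 := by
  have h := hA.2.symm.trans hA.1.1.trace_eq_sum_eigenvalues
  have := congrArg Complex.re h
  simpa using this.symm

lemma eig_le_one {ι : Type*} [Fintype ι] [DecidableEq ι] {A : Matrix ι ι ℂ} (hA : IsDensity A)
    (i : ι) : hA.1.1.eigenvalues i ≤ 1 := by
  rw [← sum_eig hA]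
  exact Finset.single_le_sum (f := fun i => hA.1.1.eigenvalues i)
    (fun j _ => hA.1.eigenvalues_nonneg j) (Finset.mem_univ i)

lemma trace_mpow {ι : Type*} [Fintype ι] [DecidableEq ι] {A : Matrix ι ι ℂ} (hA : A.IsHermitian)
    (r : ℝ) : (mpow A r).trace = ((∑ i, pw r (hA.eigenvalues i) : ℝ) : ℂ) := by
  rw [mpow_eq hA, Matrix.trace_mul_cycle, Unitary.star_mul_self_of_mem hA.eigenvectorUnitary.2, one_mul, Matrix.trace_diagonal]
  push_cast; rfl

lemma trace_mpow_pos {ι : Type*} [Fintype ι] [DecidableEq ι] {A : Matrix ι ι ℂ} (hA : IsDensity A)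
    (r : ℝ) : 0 < ∑ i, pw r (hA.1.1.eigenvalues i) := by
  have h1 : ∃ i, hA.1.1.eigenvalues i ≠ 0 := by
    by_contra! h
    have := sum_eig hA
    simp [h] at this
  obtain ⟨i, hi⟩ := h1
  refine Finset.sum_pos' (fun j _ => pw_nonneg (hA.1.eigenvalues_nonneg j))
    ⟨i, Finset.mem_univ _, ?_⟩
  rw [pw, if_neg hi]
  exact Real.rpow_pos_of_pos (lt_of_le_of_ne (hA.1.eigenvalues_nonneg i) hi.symm) _

lemma trace_mpow_le {d : ℕ} {A : Matrix (Fin d) (Fin d) ℂ} (hd : 0 < d) (hA : IsDensity A)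
    {s : ℝ} (h0 : 0 ≤ s) (h1 : s < 1) :
    ∑ i, pw (1 - s) (hA.1.1.eigenvalues i) ≤ (d : ℝ) ^ s := by
  have hd' : (0 : ℝ) < d := by exact_mod_cast hd
  have hc := (Real.concaveOn_rpow (p := 1 - s) (by linarith) (by linarith)).le_map_sum
    (t := Finset.univ) (w := fun _ : Fin d => (d : ℝ)⁻¹) (p := hA.1.1.eigenvalues)
    (fun _ _ => by positivity) (by simp [hd'.ne']) (fun i _ => hA.1.eigenvalues_nonneg i)
  simp only [smul_eq_mul, ← Finset.mul_sum] at hc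
  rw [sum_eig hA, mul_one] at hc
  have e : ∑ i, pw (1 - s) (hA.1.1.eigenvalues i) = ∑ i, hA.1.1.eigenvalues i ^ (1 - s) := by
    refine Finset.sum_congr rfl fun i _ => ?_
    unfold pw; split_ifs with h
    · rw [h, Real.zero_rpow (by linarith)]
    · rfl
  rw [e]
  have e2 : (d : ℝ) ^ s = d * (d : ℝ)⁻¹ ^ (1 - s) := by
    rw [Real.inv_rpow hd'.le, ← Real.rpow_neg hd'.le, neg_sub, Real.rpow_sub_one hd'.ne']
    field_simp
  rw [e2]
  calc _ = d * ((d : ℝ)⁻¹ * ∑ i, hA.1.1.eigenvalues i ^ (1 - s)) := by field_simp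
    _ ≤ _ := by gcongr

/-- key inequality -/
lemma key {d : ℕ} (hd : 0 < d) {F : Matrix (Fin d) (Fin d) ℂ} (hF : IsDensity F)
    {s : ℝ} (h0 : 0 ≤ s) (h1 : s < 1) :
    ∃ G, IsDensity G ∧ ∀ S : Matrix (Fin d) (Fin d) ℂ, IsDensity S →
      ((mpow S s * mpow F (1 - s)).trace).re ≤ (d : ℝ) ^ s * ((mpow S 0 * G).trace).re := by
  set T := ∑ i, pw (1 - s) (hF.1.1.eigenvalues i) with hT
  have hTpos : 0 < T := trace_mpow_pos hF _
  have hTle : T ≤ (d : ℝ) ^ s := trace_mpow_le hd hF h0 h1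
  have hG : ((T⁻¹ : ℝ) • mpow F (1 - s)).PosSemidef := (mpow_psd hF.1 _).smul (by positivity)
  refine ⟨(T⁻¹ : ℝ) • mpow F (1 - s), ⟨hG, ?_⟩, fun S hS => ?_⟩
  · rw [Matrix.trace_smul, trace_mpow hF.1.1, ← hT, Complex.real_smul, ← Complex.ofReal_mul,
      inv_mul_cancel₀ hTpos.ne', Complex.ofReal_one]
  · obtain ⟨w, hw0, -, hw⟩ := exists_weights hS.1.1 (mpow_psd hF.1 (1 - s))
    have e : ((mpow S 0 * ((T⁻¹ : ℝ) • mpow F (1 - s))).trace).re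
        = T⁻¹ * ((mpow S 0 * mpow F (1 - s)).trace).re := by
      rw [Matrix.mul_smul, Matrix.trace_smul, Complex.smul_re, smul_eq_mul]
    have h2 : ((mpow S s * mpow F (1 - s)).trace).re ≤ ((mpow S 0 * mpow F (1 - s)).trace).re := by
      rw [hw, hw]
      refine Finset.sum_le_sum fun i _ => mul_le_mul_of_nonneg_right ?_ (hw0 i)
      unfold pw; split_ifs
      · exact le_rfl
      · rw [Real.rpow_zero]
        exact Real.rpow_le_one (hS.1.eigenvalues_nonneg i) (eig_le_one hS i) h0
    have h3 : 0 ≤ ((mpow S 0 * mpow F (1 - s)).trace).re := by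
      rw [hw]
      exact Finset.sum_nonneg fun i _ =>
        mul_nonneg (pw_nonneg (hS.1.eigenvalues_nonneg i)) (hw0 i)
    rw [e]
    calc _ ≤ _ := h2
      _ = T * (T⁻¹ * ((mpow S 0 * mpow F (1 - s)).trace).re) := by field_simp
      _ ≤ _ := by gcongr

lemma tr_zero_le_one {d : ℕ} {S F : Matrix (Fin d) (Fin d) ℂ} (hS : IsDensity S)
    (hF : IsDensity F) : ((mpow S 0 * F).trace).re ≤ 1 := by
  obtain ⟨w, hw0, hw1, hw⟩ := exists_weights hS.1.1 hF.1
  rw [hF.2, Complex.one_re] at hw1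
  rw [hw, ← hw1]
  refine Finset.sum_le_sum fun i _ => mul_le_of_le_one_left (hw0 i) ?_
  unfold pw; split_ifs
  · exact zero_le_one
  · rw [Real.rpow_zero]

lemma tendsto_mpow {d : ℕ} {A : Matrix (Fin d) (Fin d) ℂ} (hA : A.IsHermitian) {f : ℝ → ℝ} {a : ℝ}
    (hf : Filter.Tendsto f Filter.atTop (nhds a)) :
    Filter.Tendsto (fun ρ => mpow A (f ρ)) Filter.atTop (nhds (mpow A a)) := by
  simp only [mpow_eq hA]
  have hD : Filter.Tendsto (fun ρ => Matrix.diagonal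
      (fun i => ((pw (f ρ) (hA.eigenvalues i) : ℝ) : ℂ))) Filter.atTop
      (nhds (Matrix.diagonal (fun i => ((pw a (hA.eigenvalues i) : ℝ) : ℂ)))) := by
    refine (Continuous.matrix_diagonal continuous_id).continuousAt.tendsto.comp ?_
    refine tendsto_pi_nhds.2 fun i => ?_
    refine (Complex.continuous_ofReal.tendsto _).comp ?_
    unfold pw
    by_cases h : hA.eigenvalues i = 0
    · simp [h]
    · simp only [if_neg h]
      exact (Real.continuousAt_const_rpow h).tendsto.comp hf
  exact (hD.const_mul _).mul_const _

lemma term_coe {p t : ℝ} (h : p = 0 ∨ 0 < t) :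
    (p : EReal) * negLog t = ((p * -Real.log t : ℝ) : EReal) := by
  rcases h with rfl | h
  · simp
  · rw [negLog, if_neg (not_le.2 h), EReal.coe_mul]

lemma coe_sum' {X : Type*} (s : Finset X) (f : X → ℝ) :
    ((∑ x ∈ s, f x : ℝ) : EReal) = ∑ x ∈ s, (f x : EReal) := by
  classical
  induction s using Finset.induction_on with
  | empty => simp
  | insert a s ha ih => rw [Finset.sum_insert ha, Finset.sum_insert ha, EReal.coe_add, ih]

lemma sum_coe {X : Type*} [Fintype X] {P t : X → ℝ} (h : ∀ x, P x = 0 ∨ 0 < t x) :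
    ∑ x, (P x : EReal) * negLog (t x) = ((∑ x, P x * -Real.log (t x) : ℝ) : EReal) := by
  rw [coe_sum']
  exact Finset.sum_congr rfl fun x _ => term_coe (h x)

lemma sum_ne_bot' {X : Type*} (s : Finset X) (f : X → EReal) (h : ∀ x, f x ≠ ⊥) :
    ∑ x ∈ s, f x ≠ ⊥ := by
  classical
  induction s using Finset.induction_on with
  | empty => simp
  | insert a s ha ih =>
    rw [Finset.sum_insert ha]
    simp [EReal.add_eq_bot_iff, h a, ih]

lemma sum_top {X : Type*} [Fintype X] {P t : X → ℝ} (hP : ∀ x, 0 ≤ P x)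
    (h : ¬ ∀ x, P x = 0 ∨ 0 < t x) :
    ∑ x, (P x : EReal) * negLog (t x) = ⊤ := by
  classical
  push Not at h
  obtain ⟨x, hx, ht⟩ := h
  have htop : ∀ y, P y ≠ 0 → t y ≤ 0 → (P y : EReal) * negLog (t y) = ⊤ := by
    intro y hy hty
    rw [negLog, if_pos hty, EReal.coe_mul_top_of_pos (lt_of_le_of_ne (hP y) hy.symm)]
  rw [← Finset.add_sum_erase _ _ (Finset.mem_univ x), htop x hx ht]
  refine EReal.top_add_of_ne_bot (sum_ne_bot' _ _ fun y => ?_)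
  by_cases hy : P y = 0 ∨ 0 < t y
  · rw [term_coe hy]; exact EReal.coe_ne_bot _
  · push Not at hy
    rw [htop y hy.1 hy.2]; exact top_ne_bot

lemma Rinf_real {X : Type*} [Fintype X] {d : ℕ} (hd : 0 < d)
    (S : X → Matrix (Fin d) (Fin d) ℂ) (hS : ∀ x, IsDensity (S x))
    (P : X → ℝ) (hP : IsProbDist P) : ∃ r : ℝ, Rinf S P = (r : EReal) := by
  have hd' : (0 : ℝ) < d := by exact_mod_cast hd
  have hnb : Rinf S P ≠ ⊥ := by
    have : (0 : EReal) ≤ Rinf S P := by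
      refine le_iInf fun F => Finset.sum_nonneg fun x _ => ?_
      refine mul_nonneg (by exact_mod_cast hP.1 x) ?_
      unfold negLog; split_ifs with h
      · exact le_top
      · have := Real.log_nonpos (not_le.1 h).le (tr_zero_le_one (hS x) F.2)
        exact_mod_cast neg_nonneg.2 this
    exact fun h => by simp [h] at this
  have hnt : Rinf S P ≠ ⊤ := by
    have hI : IsDensity (((d : ℝ)⁻¹ : ℝ) • (1 : Matrix (Fin d) (Fin d) ℂ)) := by
      refine ⟨Matrix.PosSemidef.one.smul (by positivity), ?_⟩
      rw [Matrix.trace_smul, Matrix.trace_one, Complex.real_smul]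
      have : (d : ℂ) ≠ 0 := by exact_mod_cast hd.ne'
      simp [this]
    have hle := iInf_le (fun F : {F : Matrix (Fin d) (Fin d) ℂ // IsDensity F} =>
      ∑ x, ((P x : ℝ) : EReal) * negLog ((Matrix.trace (mpow (S x) 0 * F.1)).re)) ⟨_, hI⟩
    rw [sum_coe (fun x => Or.inr ?_)] at hle
    · exact ne_top_of_le_ne_top (EReal.coe_ne_top _) hle
    · rw [Matrix.mul_smul, mul_one, Matrix.trace_smul, Complex.smul_re, smul_eq_mul,
        trace_mpow (hS x).1.1, Complex.ofReal_re]
      exact mul_pos (by positivity) (trace_mpow_pos (hS x) 0)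
  exact ⟨_, (EReal.coe_toReal hnt hnb).symm⟩

/-- **The smallest rate at which the constant-composition sphere packing exponent is
finite**: `E₀^cc(ρ,P)/ρ → R_∞(P)` as `ρ → ∞`. -/
theorem tendsto_E0cc_div_rho
    {X : Type*} [Fintype X] [DecidableEq X] {d : ℕ}
    (S : X → Matrix (Fin d) (Fin d) ℂ) (hS : ∀ x, IsDensity (S x))
    (P : X → ℝ) (hP : IsProbDist P) :
    Filter.Tendsto (fun ρ : ℝ => ((ρ⁻¹ : ℝ) : EReal) * E0cc S ρ P)
      Filter.atTop (nhds (Rinf S P)) := by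
  have hd : 0 < d := by
    rcases Nat.eq_zero_or_pos d with rfl | h
    · exfalso
      have hX : Nonempty X := by
        by_contra hX
        rw [not_nonempty_iff] at hX
        have := hP.2
        simp at this
      obtain ⟨x⟩ := hX
      have := (hS x).2
      simp [Matrix.trace] at this
    · exact h
  have hd' : (0 : ℝ) < d := by exact_mod_cast hd
  obtain ⟨r, hr⟩ := Rinf_real hd S hS P hP
  have hinv : Filter.Tendsto (fun ρ : ℝ => ρ⁻¹) Filter.atTop (nhds 0) := tendsto_inv_atTop_zero
  have hs : Filter.Tendsto (fun ρ : ℝ => 1 / (1 + ρ)) Filter.atTop (nhds 0) := by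
    simp only [one_div]
    exact tendsto_inv_atTop_zero.comp (Filter.tendsto_atTop_add_const_left _ _ Filter.tendsto_id)
  have hs1 : ∀ ρ : ℝ, 0 < ρ → ρ / (1 + ρ) = 1 - 1 / (1 + ρ) := by
    intro ρ h; field_simp; ring
  have hq : Filter.Tendsto (fun ρ : ℝ => ρ / (1 + ρ)) Filter.atTop (nhds 1) := by
    have := hs.const_sub 1
    rw [sub_zero] at this
    refine this.congr' ?_
    filter_upwards [Filter.eventually_gt_atTop 0] with ρ h using (hs1 ρ h).symm
  have hratio : Filter.Tendsto (fun ρ : ℝ => ρ⁻¹ * (1 + ρ)) Filter.atTop (nhds 1) := by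
    have := hinv.add_const 1
    rw [zero_add] at this
    refine this.congr' ?_
    filter_upwards [Filter.eventually_gt_atTop 0] with ρ h
    field_simp
  rw [tendsto_order]
  constructor
  · intro a ha
    have hlow : ∀ ρ : ℝ, 0 < ρ →
        ((ρ⁻¹ * (1 + ρ) * r - ρ⁻¹ * Real.log d : ℝ) : EReal) ≤ ((ρ⁻¹ : ℝ) : EReal) * E0cc S ρ P := by
      intro ρ hρ
      have : (((1 + ρ) * r - Real.log d : ℝ) : EReal) ≤ E0cc S ρ P := by
        refine le_iInf fun F => ?_
        by_cases hx : ∀ x, P x = 0 ∨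
            0 < ((Matrix.trace (mpow (S x) (1 / (1 + ρ)) * mpow F.1 (ρ / (1 + ρ)))).re)
        · obtain ⟨G, hG, hk⟩ := key hd F.2 (s := 1 / (1 + ρ)) (by positivity)
            (by rw [div_lt_one (by positivity)]; linarith)
          rw [← hs1 ρ hρ] at hk
          have hu : ∀ x, P x = 0 ∨ 0 < ((mpow (S x) 0 * G).trace).re := by
            intro x
            refine (hx x).imp_right fun h => ?_
            exact pos_of_mul_pos_right (h.trans_le (hk _ (hS x))) (by positivity)
          have hle : Rinf S P ≤ _ := iInf_le _ (⟨G, hG⟩ : {F // IsDensity F})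
          rw [hr, sum_coe hu, EReal.coe_le_coe_iff] at hle
          rw [sum_coe hx, ← EReal.coe_mul, EReal.coe_le_coe_iff]
          have hsum : ∑ x, (P x * -Real.log ((mpow (S x) 0 * G).trace).re
                - P x * (1 / (1 + ρ) * Real.log d)) ≤
              ∑ x, P x * -Real.log
                ((Matrix.trace (mpow (S x) (1 / (1 + ρ)) * mpow F.1 (ρ / (1 + ρ)))).re) := by
            refine Finset.sum_le_sum fun x _ => ?_
            rw [← mul_sub]
            rcases hx x with h | h
            · simp [h]
            · refine mul_le_mul_of_nonneg_left ?_ (hP.1 x)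
              have h1 := Real.log_le_log h (hk _ (hS x))
              have hpos := pos_of_mul_pos_right (h.trans_le (hk _ (hS x))) (by positivity)
              rw [Real.log_mul (by positivity) hpos.ne', Real.log_rpow hd'] at h1
              linarith
          rw [Finset.sum_sub_distrib, ← Finset.sum_mul, hP.2, one_mul] at hsum
          have h2 : r - 1 / (1 + ρ) * Real.log d ≤ _ := le_trans (by linarith) hsum
          have h3 := mul_le_mul_of_nonneg_left h2 (by positivity : 0 ≤ 1 + ρ)
          refine le_trans (le_of_eq ?_) h3
          field_simp
        · rw [sum_top hP.1 hx, EReal.coe_mul_top_of_pos (by positivity)]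
          exact le_top
      have h2 := mul_le_mul_of_nonneg_left this
        (show (0 : EReal) ≤ ((ρ⁻¹ : ℝ) : EReal) by exact_mod_cast (inv_pos.2 hρ).le)
      refine le_trans (le_of_eq ?_) h2
      rw [← EReal.coe_mul]
      congr 1; ring
    have hlim : Filter.Tendsto (fun ρ : ℝ => ((ρ⁻¹ * (1 + ρ) * r - ρ⁻¹ * Real.log d : ℝ) : EReal))
        Filter.atTop (nhds (Rinf S P)) := by
      rw [hr]
      refine (continuous_coe_real_ereal.tendsto _).comp ?_
      have := (hratio.mul_const r).sub (hinv.mul_const (Real.log d))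
      simpa using this
    filter_upwards [hlim.eventually (lt_mem_nhds ha), Filter.eventually_gt_atTop 0] with ρ h1 h2
    exact h1.trans_le (hlow ρ h2)
  · intro b hb
    obtain ⟨F, hF⟩ := iInf_lt_iff.1 hb
    have hx : ∀ x, P x = 0 ∨ 0 < ((mpow (S x) 0 * F.1).trace).re := by
      by_contra hx
      rw [sum_top hP.1 hx] at hF
      exact not_top_lt hF
    rw [sum_coe hx] at hF
    have ht : ∀ x, Filter.Tendsto (fun ρ : ℝ =>
        (Matrix.trace (mpow (S x) (1 / (1 + ρ)) * mpow F.1 (ρ / (1 + ρ)))).re) Filter.atTop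
        (nhds ((mpow (S x) 0 * F.1).trace).re) := by
      intro x
      have h1 := (tendsto_mpow (hS x).1.1 hs).mul (tendsto_mpow F.2.1.1 hq)
      rw [mpow_one F.2.1.1] at h1
      exact (Complex.continuous_re.tendsto _).comp
        (((continuous_id.matrix_trace).tendsto _).comp h1)
    have hev : ∀ᶠ ρ : ℝ in Filter.atTop, ∀ x, P x = 0 ∨
        0 < (Matrix.trace (mpow (S x) (1 / (1 + ρ)) * mpow F.1 (ρ / (1 + ρ)))).re := by
      refine Filter.eventually_all.2 fun x => ?_
      rcases hx x with h | h
      · exact Filter.Eventually.of_forall fun _ => Or.inl h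
      · exact ((ht x).eventually (lt_mem_nhds h)).mono fun _ h => Or.inr h
    have hlim : Filter.Tendsto (fun ρ : ℝ => ((ρ⁻¹ * (1 + ρ) * ∑ x, P x * -Real.log
        ((Matrix.trace (mpow (S x) (1 / (1 + ρ)) * mpow F.1 (ρ / (1 + ρ)))).re) : ℝ) : EReal))
        Filter.atTop (nhds ((∑ x, P x * -Real.log ((mpow (S x) 0 * F.1).trace).re : ℝ) : EReal)) := by
      refine (continuous_coe_real_ereal.tendsto _).comp ?_
      rw [← one_mul (∑ x, P x * -Real.log ((mpow (S x) 0 * F.1).trace).re)]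
      refine hratio.mul (tendsto_finsetSum _ fun x _ => ?_)
      rcases hx x with h | h
      · simp [h]
      · exact ((ht x).log h.ne').neg.const_mul _
    filter_upwards [hlim.eventually (gt_mem_nhds hF), hev, Filter.eventually_gt_atTop 0]
      with ρ h1 h2 h3
    refine lt_of_le_of_lt ?_ h1
    have hle : E0cc S ρ P ≤ _ := iInf_le _ F
    rw [sum_coe h2, ← EReal.coe_mul] at hle
    have h4 := mul_le_mul_of_nonneg_left hle
        (show (0 : EReal) ≤ ((ρ⁻¹ : ℝ) : EReal) by exact_mod_cast (inv_pos.2 h3).le)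
    rw [← EReal.coe_mul, ← mul_assoc] at h4
    exact h4

end SPB
end
end
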